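/- Let α ∈ (0,1) and let φ : [0,∞) → [0,∞) be the monotone rearrangement of μ_1 onto μ_α, i.e. the increasing map satisfying e^{-x} = Z_α^{-1} ∫_{φ(x)}^{+∞} e^{-y^α} dy for all x ≥ 0, where Z_α = ∫_0^∞ e^{-y^α} dy. Then there is a constant K > 0 depending only on α such that for all x, y ∈ [0,+∞), | φ(x) − φ(y) | ≤ K · max( |x − y|, x^{1/α − 1} |x − y|, |x − y|^{1/α} ). -/

import Mathlib

open MeasureTheory Filter Topology

noncomputable section

/-- The normalizing constant `Z_α = ∫_0^∞ e^{-y^α} dy`. -/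
def Zalpha (α : ℝ) : ℝ := ∫ y in Set.Ioi (0 : ℝ), Real.exp (-y ^ α)

/-!
The rearrangement is the inverse on `[0, ∞)` of the cumulative hazard `H` of `μ_α`, and `H'(t)` is
the reciprocal of the Mills ratio `e^{t^α} ∫_t^∞ e^{-y^α} dy`. Let `0 < β ≤ min α 1`. Substituting
`y = t + (1 + t)^{1-β} r` bounds the Mills ratio by `C (1 + t)^{1-β}`, so that
`b - a ≤ C (1 + b)^{1-β} (H b - H a)` for `0 ≤ a ≤ b`. For `a = 0` this gives
`(1 + b)^β ≤ 1 + C H b`, and inserting the latter into the former yields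
`b - a ≤ C (1 + C H b)^{1/β-1} (H b - H a)`.
-/

section Integral

open Set

variable {E : Type*} [NormedAddCommGroup E] [NormedSpace ℝ E]

theorem mul_integral_Ioi_zero_comp_add_mul (f : ℝ → E) (t : ℝ) {w : ℝ} (hw : 0 < w) :
    w • ∫ r in Ioi 0, f (t + w * r) = ∫ y in Ioi t, f y := by
  have htranslate := (measurePreserving_add_left volume t).setIntegral_preimage_emb
    (measurableEmbedding_addLeft t) f (Ioi t)
  rw [preimage_const_add_Ioi, sub_self] at htranslate
  rw [integral_comp_mul_left_Ioi' (fun s => f (t + s)) 0 hw, mul_zero, htranslate]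

theorem hasDerivAt_integral_Ioi [CompleteSpace E] {f : ℝ → E} {a : ℝ} (hf : Continuous f)
    (hint : IntegrableOn f (Ioi a)) (t : ℝ) :
    HasDerivAt (fun s => ∫ y in Ioi s, f y) (-f t) t := by
  have hsplit : (fun s => ∫ y in Ioi s, f y) =
      fun s => (∫ y in s..a, f y) + ∫ y in Ioi a, f y :=
    funext fun s =>
      (intervalIntegral.integral_interval_add_Ioi' (hf.intervalIntegrable s a) hint).symm
  rw [hsplit]
  exact (intervalIntegral.integral_hasDerivAt_left (hf.intervalIntegrable t a)
    hf.stronglyMeasurable.stronglyMeasurableAtFilter hf.continuousAt).add_const _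

theorem integral_Ioi_exp_pos {f : ℝ → ℝ} {t : ℝ}
    (hf : IntegrableOn (fun y => Real.exp (f y)) (Ioi t)) :
    0 < ∫ y in Ioi t, Real.exp (f y) :=
  have : NeZero (volume.restrict (Ioi t)) := ⟨by simp [Measure.restrict_eq_zero]⟩
  integral_exp_pos hf

end Integral

section Power

variable {α β p C t z r x d : ℝ}

theorem mul_rpow_mul_sub_le_rpow_sub_rpow (hβ0 : 0 ≤ β) (hβ1 : β ≤ 1) (hβα : β ≤ α)
    (ht : 0 ≤ t) (htz : t ≤ z) (hz : 0 < z) :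
    β * (z ^ (α - 1) * (z - t)) ≤ z ^ α - t ^ α := by
  have hratio : t / z ≤ 1 := (div_le_one hz).2 htz
  have hbernoulli : (t / z) ^ α ≤ 1 + β * (t / z - 1) :=
    calc (t / z) ^ α ≤ (t / z) ^ β :=
          Real.rpow_le_rpow_of_exponent_ge' (by positivity) hratio hβ0 hβα
      _ = (1 + (t / z - 1)) ^ β := by rw [add_sub_cancel]
      _ ≤ 1 + β * (t / z - 1) :=
          rpow_one_add_le_one_add_mul_self (by linarith [div_nonneg ht hz.le]) hβ0 hβ1
  rw [Real.div_rpow ht hz.le, div_le_iff₀ (by positivity)] at hbernoulli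
  calc β * (z ^ (α - 1) * (z - t)) = z ^ α - (1 + β * (t / z - 1)) * z ^ α := by
        rw [Real.rpow_sub_one hz.ne']
        field_simp
        ring
    _ ≤ z ^ α - t ^ α := by linarith

theorem rpow_sub_one_le_one_add_rpow_mul (hβ0 : 0 ≤ β) (hβ1 : β ≤ 1) (hr : 0 ≤ r) :
    r ^ β - 1 ≤ (1 + r) ^ (β - 1) * r := by
  have hexpand : (1 + r) ^ (β - 1) * r = (1 + r) ^ β - (1 + r) ^ (β - 1) := by
    rw [Real.rpow_sub_one (by positivity)]
    field_simp
    ring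
  have hle : r ^ β ≤ (1 + r) ^ β := by gcongr; linarith
  have hle_one : (1 + r) ^ (β - 1) ≤ 1 :=
    Real.rpow_le_one_of_one_le_of_nonpos (by linarith) (by linarith)
  linarith

theorem rpow_add_mul_rpow_sub_one_le (hβ0 : 0 ≤ β) (hβ1 : β ≤ 1) (hβα : β ≤ α)
    (ht : 0 ≤ t) (hr : 0 ≤ r) :
    t ^ α + β * (r ^ β - 1) ≤ (t + (1 + t) ^ (1 - β) * r) ^ α := by
  set w := (1 + t) ^ (1 - β) with hw
  have hw1 : 1 ≤ w := Real.one_le_rpow (by linarith) (by linarith)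
  have hwr : 0 ≤ w * r := by positivity
  rcases le_total r 1 with hr1 | hr1
  · have hrβ : r ^ β ≤ 1 := Real.rpow_le_one hr hr1 hβ0
    have htα : t ^ α ≤ (t + w * r) ^ α :=
      Real.rpow_le_rpow ht (by linarith) (hβ0.trans hβα)
    nlinarith
  have hwt : w ≤ 1 + t :=
    (Real.rpow_le_rpow_of_exponent_le (by linarith) (by linarith)).trans_eq (Real.rpow_one _)
  have hz1 : 1 ≤ t + w * r := by nlinarith
  have hz : t + w * r ≤ (1 + t) * (1 + r) := by nlinarith
  have hscale : (1 + r) ^ (β - 1) * r = ((1 + t) * (1 + r)) ^ (β - 1) * (w * r) := by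
    rw [Real.mul_rpow (by positivity) (by positivity), hw, ← neg_sub β 1,
      Real.rpow_neg (by positivity)]
    field_simp
  have hslope : r ^ β - 1 ≤ (t + w * r) ^ (α - 1) * (w * r) :=
    calc r ^ β - 1 ≤ (1 + r) ^ (β - 1) * r := rpow_sub_one_le_one_add_rpow_mul hβ0 hβ1 hr
      _ = ((1 + t) * (1 + r)) ^ (β - 1) * (w * r) := hscale
      _ ≤ (t + w * r) ^ (β - 1) * (w * r) := mul_le_mul_of_nonneg_right
          (Real.rpow_le_rpow_of_nonpos (by linarith) hz (by linarith)) hwr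
      _ ≤ (t + w * r) ^ (α - 1) * (w * r) := by gcongr
  have htangent := mul_rpow_mul_sub_le_rpow_sub_rpow hβ0 hβ1 hβα ht
    (le_add_of_nonneg_right hwr) (by linarith)
  rw [add_sub_cancel_left] at htangent
  linarith [mul_le_mul_of_nonneg_left hslope hβ0]

theorem one_add_mul_add_rpow_mul_le (hp : 0 ≤ p) (hC : 0 ≤ C) (hx : 0 ≤ x) (hd : 0 ≤ d) :
    (1 + C * (x + d)) ^ p * d ≤
      (1 + 2 * C) ^ p * max (max d (x ^ p * d)) (d ^ (p + 1)) := by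
  set m := max (max 1 x) d with hm
  have h1m : 1 ≤ m := (le_max_left _ _).trans (le_max_left _ _)
  have hxm : x ≤ m := (le_max_right _ _).trans (le_max_left _ _)
  have hdm : d ≤ m := le_max_right _ _
  have hmax : m ^ p * d = max (max d (x ^ p * d)) (d ^ (p + 1)) := by
    rw [hm, Real.rpow_max (by positivity) hd hp, Real.rpow_max zero_le_one hx hp,
      Real.one_rpow, max_mul_of_nonneg _ _ hd, max_mul_of_nonneg _ _ hd, one_mul,
      Real.rpow_add_one' hd (by positivity)]
  calc (1 + C * (x + d)) ^ p * d ≤ ((1 + 2 * C) * m) ^ p * d := by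
        gcongr
        nlinarith
    _ = (1 + 2 * C) ^ p * (m ^ p * d) := by
        rw [Real.mul_rpow (by positivity) (by positivity), mul_assoc]
    _ = _ := by rw [hmax]

end Power

section Tail

open Set

variable {α β a b t : ℝ}

theorem continuous_exp_neg_rpow (hα : 0 ≤ α) : Continuous fun y : ℝ => Real.exp (-y ^ α) :=
  Real.continuous_exp.comp (Real.continuous_rpow_const hα).neg

theorem integrableOn_Ioi_exp_neg_mul_rpow {c : ℝ} (hα : 0 < α) (hc : 0 < c) :
    IntegrableOn (fun y : ℝ => Real.exp (-c * y ^ α)) (Ioi 0) := by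
  simpa using integrableOn_rpow_mul_exp_neg_mul_rpow (s := 0) (by norm_num) hα hc

theorem integrableOn_Ioi_zero_exp_neg_rpow (hα : 0 < α) :
    IntegrableOn (fun y : ℝ => Real.exp (-y ^ α)) (Ioi 0) := by
  simpa using integrableOn_Ioi_exp_neg_mul_rpow hα one_pos

theorem integral_Ioi_exp_neg_rpow_pos (hα : 0 < α) (ht : 0 ≤ t) :
    0 < ∫ y in Ioi t, Real.exp (-y ^ α) :=
  integral_Ioi_exp_pos ((integrableOn_Ioi_zero_exp_neg_rpow hα).mono_set (Ioi_subset_Ioi ht))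

theorem Zalpha_pos (hα : 0 < α) : 0 < Zalpha α :=
  integral_Ioi_exp_neg_rpow_pos hα le_rfl

/-- A constant `C` such that `∫_t^∞ e^{-y^α} dy ≤ C (1 + t)^{1-β} e^{-t^α}` for all `t ≥ 0`
and all `α ≥ β`, where `0 < β ≤ 1`. -/
def millsConst (β : ℝ) : ℝ := Real.exp β * ∫ r in Ioi (0 : ℝ), Real.exp (-β * r ^ β)

theorem millsConst_pos (hβ : 0 < β) : 0 < millsConst β :=
  mul_pos (Real.exp_pos β) (integral_Ioi_exp_pos (integrableOn_Ioi_exp_neg_mul_rpow hβ hβ))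

theorem integral_Ioi_exp_neg_rpow_le (hβ0 : 0 < β) (hβ1 : β ≤ 1) (hβα : β ≤ α) (ht : 0 ≤ t) :
    ∫ y in Ioi t, Real.exp (-y ^ α) ≤
      millsConst β * (1 + t) ^ (1 - β) * Real.exp (-t ^ α) := by
  set w := (1 + t) ^ (1 - β)
  have hw : 0 < w := by positivity
  have hpointwise : ∀ r ∈ Ioi (0 : ℝ), Real.exp (-(t + w * r) ^ α) ≤
      Real.exp (-t ^ α) * Real.exp β * Real.exp (-β * r ^ β) := by
    intro r hr
    rw [← Real.exp_add, ← Real.exp_add, Real.exp_le_exp]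
    linarith [rpow_add_mul_rpow_sub_one_le hβ0.le hβ1 hβα ht (le_of_lt hr)]
  calc ∫ y in Ioi t, Real.exp (-y ^ α)
      = w * ∫ r in Ioi 0, Real.exp (-(t + w * r) ^ α) :=
        (mul_integral_Ioi_zero_comp_add_mul _ t hw).symm
    _ ≤ w * ∫ r in Ioi 0, Real.exp (-t ^ α) * Real.exp β * Real.exp (-β * r ^ β) := by
        refine mul_le_mul_of_nonneg_left ?_ hw.le
        exact integral_mono_of_nonneg (ae_of_all _ fun _ => (Real.exp_pos _).le)
          ((integrableOn_Ioi_exp_neg_mul_rpow hβ0 hβ0).const_mul _)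
          (ae_restrict_of_forall_mem measurableSet_Ioi hpointwise)
    _ = millsConst β * w * Real.exp (-t ^ α) := by
        rw [integral_const_mul, millsConst]
        ring

/-- The cumulative hazard function `t ↦ -log μ_α((t, ∞))` of `μ_α`, for `t ≥ 0`. It is a left
inverse of the monotone rearrangement of `μ_1` onto `μ_α`. -/
def cumulativeHazard (α t : ℝ) : ℝ :=
  -Real.log ((Zalpha α)⁻¹ * ∫ y in Ioi t, Real.exp (-y ^ α))

theorem cumulativeHazard_zero (hα : 0 < α) : cumulativeHazard α 0 = 0 := by
  rw [cumulativeHazard, ← Zalpha, inv_mul_cancel₀ (Zalpha_pos hα).ne', Real.log_one, neg_zero]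

theorem cumulativeHazard_of_exp_neg_eq {x : ℝ}
    (h : Real.exp (-x) = (Zalpha α)⁻¹ * ∫ y in Ioi t, Real.exp (-y ^ α)) :
    cumulativeHazard α t = x := by
  rw [cumulativeHazard, ← h, Real.log_exp, neg_neg]

theorem hasDerivAt_cumulativeHazard (hα : 0 < α) (ht : 0 ≤ t) :
    HasDerivAt (cumulativeHazard α)
      (Real.exp (-t ^ α) / ∫ y in Ioi t, Real.exp (-y ^ α)) t := by
  have hZ := Zalpha_pos hα
  have hT := integral_Ioi_exp_neg_rpow_pos hα ht
  have htail := hasDerivAt_integral_Ioi (continuous_exp_neg_rpow hα.le)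
    (integrableOn_Ioi_zero_exp_neg_rpow hα) t
  refine ((htail.const_mul (Zalpha α)⁻¹).log (by positivity)).neg.congr_deriv ?_
  rw [mul_neg, neg_div, neg_neg, mul_div_mul_left _ _ (inv_pos.2 hZ).ne']

theorem monotoneOn_cumulativeHazard (hα : 0 < α) : MonotoneOn (cumulativeHazard α) (Ici 0) :=
  monotoneOn_of_hasDerivWithinAt_nonneg (convex_Ici 0)
    (fun _ ht => (hasDerivAt_cumulativeHazard hα ht).continuousAt.continuousWithinAt)
    (fun _ ht => (hasDerivAt_cumulativeHazard hα (interior_subset ht)).hasDerivWithinAt)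
    (fun _ ht => div_nonneg (Real.exp_pos _).le
      (integral_Ioi_exp_neg_rpow_pos hα (interior_subset ht)).le)

theorem sub_le_mul_cumulativeHazard_sub (hβ0 : 0 < β) (hβ1 : β ≤ 1) (hβα : β ≤ α)
    (ha : 0 ≤ a) (hab : a ≤ b) :
    b - a ≤ millsConst β * (1 + b) ^ (1 - β) *
      (cumulativeHazard α b - cumulativeHazard α a) := by
  have hα : 0 < α := hβ0.trans_le hβα
  have hC := millsConst_pos hβ0
  set M := millsConst β * (1 + b) ^ (1 - β) with hM
  have hMpos : 0 < M := by have := ha.trans hab; positivity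
  have hderiv : ∀ t ∈ Icc a b, HasDerivAt (cumulativeHazard α)
      (Real.exp (-t ^ α) / ∫ y in Ioi t, Real.exp (-y ^ α)) t :=
    fun t ht => hasDerivAt_cumulativeHazard hα (ha.trans ht.1)
  have hhazard : ∀ t ∈ Icc a b, M⁻¹ ≤ deriv (cumulativeHazard α) t := by
    intro t ht
    have ht0 : 0 ≤ t := ha.trans ht.1
    rw [(hderiv t ht).deriv, inv_le_comm₀ hMpos
      (div_pos (Real.exp_pos _) (integral_Ioi_exp_neg_rpow_pos hα ht0)), inv_div,
      div_le_iff₀ (Real.exp_pos _)]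
    refine (integral_Ioi_exp_neg_rpow_le hβ0 hβ1 hβα ht0).trans ?_
    rw [hM]
    have : 0 ≤ 1 - β := sub_nonneg.2 hβ1
    gcongr
    exact ht.2
  have hmean := (convex_Icc a b).mul_sub_le_image_sub_of_le_deriv
    (fun t ht => (hderiv t ht).continuousAt.continuousWithinAt)
    (fun t ht => (hderiv t (interior_subset ht)).differentiableAt.differentiableWithinAt)
    (fun t ht => hhazard t (interior_subset ht))
    a (left_mem_Icc.2 hab) b (right_mem_Icc.2 hab) hab
  rwa [inv_mul_le_iff₀ hMpos] at hmean

theorem one_add_rpow_le_one_add_mul_cumulativeHazard (hβ0 : 0 < β) (hβ1 : β ≤ 1) (hβα : β ≤ α)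
    (ht : 0 ≤ t) : (1 + t) ^ β ≤ 1 + millsConst β * cumulativeHazard α t := by
  have hincr := sub_le_mul_cumulativeHazard_sub hβ0 hβ1 hβα le_rfl ht
  rw [cumulativeHazard_zero (hβ0.trans_le hβα), sub_zero, sub_zero] at hincr
  have hone : 1 ≤ (1 + t) ^ (1 - β) := Real.one_le_rpow (by linarith) (by linarith)
  have hsplit : (1 + t) ^ β * (1 + t) ^ (1 - β) = 1 + t := by
    rw [← Real.rpow_add (by positivity), add_sub_cancel, Real.rpow_one]
  refine le_of_mul_le_mul_right ?_ (zero_lt_one.trans_le hone)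
  linarith

theorem one_add_rpow_one_sub_le_cumulativeHazard_rpow (hβ0 : 0 < β) (hβ1 : β ≤ 1) (hβα : β ≤ α)
    (ht : 0 ≤ t) :
    (1 + t) ^ (1 - β) ≤ (1 + millsConst β * cumulativeHazard α t) ^ (1 / β - 1) := by
  have hexp : 0 ≤ 1 / β - 1 := sub_nonneg.2 ((one_le_div hβ0).2 hβ1)
  calc (1 + t) ^ (1 - β) = ((1 + t) ^ β) ^ (1 / β - 1) := by
        rw [← Real.rpow_mul (by positivity)]
        congr 1
        field_simp
    _ ≤ _ := Real.rpow_le_rpow (by positivity)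
        (one_add_rpow_le_one_add_mul_cumulativeHazard hβ0 hβ1 hβα ht) hexp

theorem abs_sub_le_mul_abs_cumulativeHazard_sub (hβ0 : 0 < β) (hβ1 : β ≤ 1) (hβα : β ≤ α)
    (ha : 0 ≤ a) (hb : 0 ≤ b) :
    |a - b| ≤ millsConst β *
      ((1 + millsConst β * max (cumulativeHazard α a) (cumulativeHazard α b)) ^ (1 / β - 1) *
        |cumulativeHazard α a - cumulativeHazard α b|) := by
  wlog hab : a ≤ b generalizing a b
  · rw [abs_sub_comm, max_comm, abs_sub_comm (cumulativeHazard α a)]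
    exact this hb ha (le_of_not_ge hab)
  have hH := monotoneOn_cumulativeHazard (hβ0.trans_le hβα) ha hb hab
  have hC := millsConst_pos hβ0
  rw [abs_sub_comm, abs_of_nonneg (sub_nonneg.2 hab), max_eq_right hH, abs_sub_comm,
    abs_of_nonneg (sub_nonneg.2 hH), ← mul_assoc]
  refine (sub_le_mul_cumulativeHazard_sub hβ0 hβ1 hβα ha hab).trans ?_
  have hstep := one_add_rpow_one_sub_le_cumulativeHazard_rpow hβ0 hβ1 hβα hb
  have := sub_nonneg.2 hH
  gcongr

end Tail

theorem rearrangement_growth_estimate_general {α : ℝ} (hα : 0 < α) :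
    ∃ K > (0 : ℝ), ∀ φ : ℝ → ℝ, (∀ x : ℝ, 0 ≤ x → 0 ≤ φ x) →
      (∀ x : ℝ, 0 ≤ x →
        Real.exp (-x) = (Zalpha α)⁻¹ * ∫ y in Set.Ioi (φ x), Real.exp (-y ^ α)) →
      ∀ x y : ℝ, 0 ≤ x → 0 ≤ y →
        |φ x - φ y| ≤ K * max (max |x - y| (x ^ (1 / min α 1 - 1) * |x - y|))
          (|x - y| ^ (1 / min α 1)) := by
  have hβ0 : 0 < min α 1 := lt_min hα one_pos
  have hβ1 : min α 1 ≤ 1 := min_le_right α 1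
  set β := min α 1
  set C := millsConst β
  have hC : 0 < C := millsConst_pos hβ0
  have hp : 0 ≤ 1 / β - 1 := sub_nonneg.2 ((one_le_div hβ0).2 hβ1)
  refine ⟨C * (1 + 2 * C) ^ (1 / β - 1), by positivity, fun φ hφpos hφ x y hx hy => ?_⟩
  have hmax : max x y ≤ x + |x - y| :=
    max_le (le_add_of_nonneg_right (abs_nonneg _)) (by linarith [neg_abs_le (x - y)])
  have hinv := abs_sub_le_mul_abs_cumulativeHazard_sub hβ0 hβ1 (min_le_left α 1)
    (hφpos x hx) (hφpos y hy)
  rw [cumulativeHazard_of_exp_neg_eq (hφ x hx), cumulativeHazard_of_exp_neg_eq (hφ y hy)] at hinv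
  have hpower := one_add_mul_add_rpow_mul_le hp hC.le hx (abs_nonneg (x - y))
  rw [sub_add_cancel] at hpower
  calc |φ x - φ y| ≤ C * ((1 + C * max x y) ^ (1 / β - 1) * |x - y|) := hinv
    _ ≤ C * ((1 + C * (x + |x - y|)) ^ (1 / β - 1) * |x - y|) := by gcongr
    _ ≤ _ := by rw [mul_assoc]; gcongr

/-- Lemma (growth estimate for the monotone rearrangement `φ` of `μ_1` onto `μ_α`,
`α ∈ (0,1)`). -/
theorem rearrangement_growth_estimate (α : ℝ) (hα0 : 0 < α) (hα1 : α < 1)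
    (φ : ℝ → ℝ)
    (hφpos : ∀ x : ℝ, 0 ≤ x → 0 ≤ φ x)
    (hφmono : StrictMonoOn φ (Set.Ici (0 : ℝ)))
    (hφ : ∀ x : ℝ, 0 ≤ x →
      Real.exp (-x) = (Zalpha α)⁻¹ * ∫ y in Set.Ioi (φ x), Real.exp (-y ^ α)) :
    ∃ K > (0 : ℝ), ∀ x y : ℝ, 0 ≤ x → 0 ≤ y →
      |φ x - φ y| ≤
        K * max (max |x - y| (x ^ (1/α - 1) * |x - y|)) (|x - y| ^ (1/α)) := by
  obtain ⟨K, hK, hbound⟩ := rearrangement_growth_estimate_general hα0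
  exact ⟨K, hK, by simpa only [min_eq_left hα1.le] using hbound φ hφpos hφ⟩

end
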